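/- Let (N, B, L) be a Hadamard triple in ℝ with 0 ∈ B ∩ L, write d = gcd(B), and let μ_{N,B} be the self-similar measure associated with (N,B), i.e., the unique Borel probability measure μ on ℝ satisfying μ = (1/#B) ∑_{b∈B} μ ∘ τ_b^{-1} where τ_b(x) = (x+b)/N. Define Λ₀ = −(K(N,L) ∩ (ℤ/d)) with ℤ/d = { m/d : m ∈ ℤ }, and Λ_n = N·Λ_{n−1} + L for n ≥ 1. Then the set Λ = ⋃_{n=0}^∞ Λ_n is a spectrum of μ_{N,B}; that is, the family of exponential functions { e^{2πiλx} : λ ∈ Λ } forms an orthonormal basis of L²(μ_{N,B}). -/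

import Mathlib

open MeasureTheory ENNReal

/-- `(N,B,L)` is a Hadamard triple in `ℝ`. -/
def IsHadamardTriple (N : ℕ) (B L : Finset ℤ) : Prop :=
  2 ≤ N ∧ 2 ≤ B.card ∧ B.card = L.card ∧
    ∀ l ∈ L, ∀ l' ∈ L, l ≠ l' →
      ∑ b ∈ B, Complex.exp (2 * Real.pi * Complex.I * (b : ℂ) * ((l : ℂ) - (l' : ℂ)) / (N : ℂ)) = 0

/-- The self-similar set `K(N,L) = { ∑_{i=1}^∞ ℓ_i/N^i : ℓ_i ∈ L }`. -/
noncomputable def KsetZ (N : ℕ) (L : Finset ℤ) : Set ℝ :=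
  { x : ℝ | ∃ a : ℕ → ℤ, (∀ i, a i ∈ L) ∧ x = ∑' i : ℕ, (a i : ℝ) / (N : ℝ) ^ (i + 1) }

/-- The exponential function `e_λ(x) = e^{2πiλx}`. -/
noncomputable def expFun (l : ℝ) : ℝ → ℂ :=
  fun x => Complex.exp (2 * Real.pi * Complex.I * (l : ℂ) * (x : ℂ))

/-- `Λ` is a spectrum of `μ`: the family `{e^{2πiλx} : λ ∈ Λ}` forms an
orthonormal basis of `L²(μ)`. -/
def IsSpectrum (μ : Measure ℝ) (Λ : Set ℝ) : Prop :=
  ∃ F : Λ → Lp ℂ 2 μ,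
    (∀ l : Λ, (F l : ℝ → ℂ) =ᵐ[μ] expFun (l : ℝ)) ∧
    Orthonormal ℂ F ∧
    (Submodule.span ℂ (Set.range F)).topologicalClosure = ⊤

/-!
Put `q x = ∑ ‖μ̂ (x + λ)‖ ^ 2`, the sum ranging over `λ ∈ Λ`. The refinement equation
`μ̂ (N x) = m x * μ̂ x`, in which `m` is the Fourier transform of the uniform measure on `B`,
together with `N Λ + L = Λ ⊆ ℤ/d`, makes the exponentials of `Λ` orthogonal and gives
`q x = ∑ ‖m ((x + ℓ) / N)‖ ^ 2 * q ((x + ℓ) / N)` over `ℓ ∈ L`, where the weights sum to `1` by the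
Hadamard condition. By Parseval, `q x` is the squared length of the projection of `e_{-x}` onto the
closed span of the exponentials, so `q ≤ 1`, with equality when `-x ∈ Λ`, and completeness amounts
to `q = 1`. Since `μ` has compact support, `q` is real analytic. As `q ≥ 1` on `K(N,L) ∩ ℤ/d ⊆ -Λ`,
the minimum principle for the averaging equation on the attractor `K(N,L)` forces `q = 1`.
-/

open Filter Topology
open scoped ComplexConjugate

section Exponentials

theorem expFun_eq_fourierChar (l x : ℝ) : expFun l x = Real.fourierChar (l * x) := by
  rw [expFun, Real.fourierChar_apply]
  push_cast
  ring_nf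

theorem expFun_comm (l x : ℝ) : expFun l x = expFun x l := by
  simp only [expFun_eq_fourierChar, mul_comm]

@[simp]
theorem norm_expFun (l x : ℝ) : ‖expFun l x‖ = 1 := by
  rw [expFun_eq_fourierChar, Circle.norm_coe]

@[simp]
theorem expFun_zero_left (x : ℝ) : expFun 0 x = 1 := by
  simp [expFun]

@[simp]
theorem expFun_zero_right (l : ℝ) : expFun l 0 = 1 := by
  simp [expFun]

theorem expFun_add_left (l l' x : ℝ) : expFun (l + l') x = expFun l x * expFun l' x := by
  simp only [expFun_eq_fourierChar, add_mul, AddChar.map_add_eq_mul, Circle.coe_mul]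

theorem expFun_add_right (l x y : ℝ) : expFun l (x + y) = expFun l x * expFun l y := by
  simp only [expFun_comm l, expFun_add_left]

theorem expFun_neg_left (l x : ℝ) : expFun (-l) x = conj (expFun l x) := by
  rw [expFun_eq_fourierChar, expFun_eq_fourierChar, neg_mul, AddChar.map_neg_eq_inv,
    Circle.coe_inv_eq_conj]

theorem expFun_sub_left (l l' x : ℝ) : expFun (l - l') x = expFun l x * conj (expFun l' x) := by
  rw [sub_eq_add_neg, expFun_add_left, expFun_neg_left]

theorem expFun_sub_right (l x y : ℝ) : expFun l (x - y) = expFun l x * conj (expFun l y) := by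
  simp only [expFun_comm l, expFun_sub_left]

theorem expFun_eq_one_iff {l x : ℝ} : expFun l x = 1 ↔ ∃ n : ℤ, l * x = n := by
  rw [expFun, Complex.exp_eq_one_iff]
  refine exists_congr fun n ↦ ?_
  rw [mul_assoc, mul_comm (n : ℂ), mul_right_inj' Complex.two_pi_I_ne_zero]
  norm_cast

theorem continuous_expFun (l : ℝ) : Continuous (expFun l) := by
  unfold expFun
  fun_prop

end Exponentials

section DualGroup

/-- The dual group `{x : ℝ | b * x ∈ ℤ for all b ∈ B}` of a finite set of integers. It is the
lattice `ℤ/d` with `d = gcd B` if `d ≠ 0`, and all of `ℝ` if `d = 0`. -/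
def dualGroup (B : Finset ℤ) : AddSubgroup ℝ where
  carrier := {x | ∀ b ∈ B, ∃ n : ℤ, (b : ℝ) * x = n}
  zero_mem' _ _ := ⟨0, by simp⟩
  add_mem' hx hy b hb := by
    obtain ⟨m, hm⟩ := hx b hb
    obtain ⟨n, hn⟩ := hy b hb
    exact ⟨m + n, by rw [mul_add, hm, hn, Int.cast_add]⟩
  neg_mem' hx b hb := by
    obtain ⟨n, hn⟩ := hx b hb
    exact ⟨-n, by rw [mul_neg, hn, Int.cast_neg]⟩

theorem finset_gcd_mem_ideal {R ι : Type*} [CommRing R] [IsPrincipalIdealRing R]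
    [NormalizedGCDMonoid R] (I : Ideal R) {s : Finset ι} {f : ι → R} (hf : ∀ i ∈ s, f i ∈ I) :
    s.gcd f ∈ I := by
  simp only [Submodule.IsPrincipal.mem_iff_generator_dvd] at hf ⊢
  exact Finset.dvd_gcd hf

theorem mem_dualGroup_iff_exists_eq_div_gcd {B : Finset ℤ} (hB : B.gcd id ≠ 0) {x : ℝ} :
    x ∈ dualGroup B ↔ ∃ m : ℤ, x = m / (B.gcd id : ℤ) := by
  have hd : ((B.gcd id : ℤ) : ℝ) ≠ 0 := mod_cast hB
  constructor
  · intro hx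
    let I : Ideal ℤ := AddSubgroup.toIntSubmodule
      ((Int.castAddHom ℝ).range.comap ((AddMonoidHom.mulRight x).comp (Int.castAddHom ℝ)))
    obtain ⟨m, hm⟩ : B.gcd id ∈ I := finset_gcd_mem_ideal I fun b hb ↦ by
      obtain ⟨n, hn⟩ := hx b hb
      exact ⟨n, hn.symm⟩
    exact ⟨m, by rw [eq_div_iff hd, mul_comm]; exact hm.symm⟩
  · rintro ⟨m, rfl⟩ b hb
    obtain ⟨c, hc⟩ : B.gcd id ∣ b := Finset.gcd_dvd hb
    refine ⟨c * m, ?_⟩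
    rw [mul_div_assoc', div_eq_iff hd]
    nth_rewrite 1 [hc]
    push_cast
    ring

theorem intCast_mem_dualGroup (B : Finset ℤ) (n : ℤ) : (n : ℝ) ∈ dualGroup B :=
  fun b _ ↦ ⟨b * n, by push_cast; rfl⟩

theorem natCast_mul_mem_dualGroup {B : Finset ℤ} {x : ℝ} (hx : x ∈ dualGroup B) (N : ℕ) :
    (N : ℝ) * x ∈ dualGroup B := by
  simpa using nsmul_mem hx N

theorem sub_mem_dualGroup_of_add_div_sub_mem {N : ℕ} (hN : (N : ℝ) ≠ 0) {B : Finset ℤ} {x y : ℝ}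
    {l l' : ℤ} (hmem : (x + l) / N - (y + l') / N ∈ dualGroup B) : x - y ∈ dualGroup B := by
  convert add_mem (natCast_mul_mem_dualGroup hmem N) (intCast_mem_dualGroup B (l' - l)) using 1
  push_cast
  field_simp
  ring

theorem eq_zero_of_mem_dualGroup_of_abs_mul_lt_one {B : Finset ℤ} {b : ℤ} (hb : b ∈ B)
    (hb0 : b ≠ 0) {x : ℝ} (hx : x ∈ dualGroup B) (hlt : |(b : ℝ) * x| < 1) : x = 0 := by
  obtain ⟨n, hn⟩ := hx b hb
  have hn0 : n = 0 := Int.abs_lt_one_iff.1 (by rw [hn] at hlt; exact_mod_cast hlt)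
  rw [hn0, Int.cast_zero] at hn
  exact (mul_eq_zero.1 hn).resolve_left (mod_cast hb0)

theorem finite_inter_dualGroup {B : Finset ℤ} {b : ℤ} (hb : b ∈ B) (hb0 : b ≠ 0)
    {K : Set ℝ} (hK : IsCompact K) : (K ∩ dualGroup B).Finite := by
  have hbR : (b : ℝ) ≠ 0 := mod_cast hb0
  have hfin : {n : ℤ | (n : ℝ) ∈ (fun x ↦ (b : ℝ) * x) '' K}.Finite :=
    (Int.isClosedEmbedding_coe_real.isCompact_preimage
      (hK.image (continuous_const_mul (b : ℝ)))).finite_of_discrete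
  refine (hfin.image fun n : ℤ ↦ (n : ℝ) / b).subset ?_
  rintro x ⟨hxK, hx⟩
  obtain ⟨n, hn⟩ := hx b hb
  exact ⟨n, ⟨x, hxK, hn⟩, by simp only [← hn, mul_div_cancel_left₀ x hbR]⟩

end DualGroup

section Mask

theorem eq_of_norm_sum_eq_card_mul {ι E : Type*} [NormedAddCommGroup E] [NormedSpace ℝ E]
    [StrictConvexSpace ℝ E] {s : Finset ι} {f : ι → E} {r : ℝ} (hf : ∀ i ∈ s, ‖f i‖ = r)
    (hsum : ‖∑ i ∈ s, f i‖ = s.card * r) {i j : ι} (hi : i ∈ s) (hj : j ∈ s) : f i = f j := by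
  classical
  obtain rfl | hij := eq_or_ne i j
  · rfl
  have hsub : {i, j} ⊆ s := Finset.insert_subset hi (Finset.singleton_subset_iff.2 hj)
  have hcard : ((s \ {i, j}).card : ℝ) + 2 = s.card := by
    have := Finset.card_sdiff_add_card_eq_card hsub
    rw [Finset.card_pair hij] at this
    exact_mod_cast this
  have hrest : ‖∑ k ∈ s \ {i, j}, f k‖ ≤ (s \ {i, j}).card * r := by
    rw [← nsmul_eq_mul]
    exact norm_sum_le_of_le _ (fun k hk ↦ (hf k (Finset.sdiff_subset hk)).le) |>.trans_eq
      (Finset.sum_const r)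
  have htri := norm_add_le (∑ k ∈ s \ {i, j}, f k) (f i + f j)
  rw [← Finset.sum_pair hij, Finset.sum_sdiff hsub, Finset.sum_pair hij, hsum, ← hcard] at htri
  refine eq_of_norm_eq_of_norm_add_eq ((hf i hi).trans (hf j hj).symm) ?_
  refine (norm_add_le _ _).antisymm ?_
  rw [hf i hi, hf j hj]
  linarith

/-- The mask `(#B)⁻¹ ∑_{b ∈ B} e^{2πibx}`, the Fourier transform of the uniform probability
measure on `B`. -/
noncomputable def mask (B : Finset ℤ) (x : ℝ) : ℂ :=
  (B.card : ℂ)⁻¹ * ∑ b ∈ B, expFun b x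

variable {B : Finset ℤ}

theorem norm_mask (B : Finset ℤ) (x : ℝ) :
    ‖mask B x‖ = (B.card : ℝ)⁻¹ * ‖∑ b ∈ B, expFun b x‖ := by
  rw [mask, norm_mul, norm_inv, Complex.norm_natCast]

theorem norm_mask_le_one (B : Finset ℤ) (x : ℝ) : ‖mask B x‖ ≤ 1 := by
  have hsum : ‖∑ b ∈ B, expFun b x‖ ≤ B.card := by
    simpa using norm_sum_le B fun b : ℤ ↦ expFun b x
  rw [norm_mask]
  exact (mul_le_mul_of_nonneg_left hsum (by positivity)).trans inv_mul_le_one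

theorem mask_zero (hB : B.Nonempty) : mask B 0 = 1 := by
  have hcard : (B.card : ℂ) ≠ 0 := mod_cast hB.card_pos.ne'
  simp [mask, hcard]

theorem mask_add_of_mem_dualGroup {g : ℝ} (hg : g ∈ dualGroup B) (x : ℝ) :
    mask B (x + g) = mask B x := by
  refine congrArg (_ * ·) (Finset.sum_congr rfl fun b hb ↦ ?_)
  rw [expFun_add_right, expFun_eq_one_iff.2 (hg b hb), mul_one]

theorem mem_dualGroup_of_norm_mask_eq_one (hB0 : 0 ∈ B) {x : ℝ} (hx : ‖mask B x‖ = 1) :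
    x ∈ dualGroup B := by
  have hcard : (B.card : ℝ) ≠ 0 := mod_cast (Finset.card_pos.2 ⟨0, hB0⟩).ne'
  have hsum : ‖∑ b ∈ B, expFun b x‖ = B.card * 1 := by
    rw [← hx, norm_mask, mul_inv_cancel_left₀ hcard]
  intro b hb
  rw [← expFun_eq_one_iff, eq_of_norm_sum_eq_card_mul (f := fun b : ℤ ↦ expFun b x)
    (fun _ _ ↦ norm_expFun _ _) hsum hb hB0, Int.cast_zero, expFun_zero_left]

end Mask

section HadamardTriple

variable {N : ℕ} {B L : Finset ℤ}

theorem sum_sq_norm_inner_eq_of_card_eq_finrank {ι 𝕜 E : Type*} [Fintype ι] [RCLike 𝕜]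
    [NormedAddCommGroup E] [InnerProductSpace 𝕜 E] [FiniteDimensional 𝕜 E] {v : ι → E}
    (hv : Orthonormal 𝕜 v) (hcard : Module.finrank 𝕜 E = Fintype.card ι) (u : E) :
    ∑ i, ‖inner 𝕜 (v i) u‖ ^ 2 = ‖u‖ ^ 2 := by
  have hspan : ⊤ ≤ Submodule.span 𝕜 (Set.range v) :=
    (hv.linearIndependent.span_eq_top_of_card_eq_finrank' hcard.symm).ge
  simpa using (OrthonormalBasis.mk hv hspan).sum_sq_norm_inner_right u

/-- The normalized vector `(#B)^{-1/2} (e^{2πibx})_{b ∈ B}`; at `x = ℓ / N` it is the column of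
the Hadamard matrix indexed by `ℓ`. -/
noncomputable def expVec (B : Finset ℤ) (x : ℝ) : EuclideanSpace ℂ B :=
  WithLp.toLp 2 fun b ↦ ((√B.card : ℝ) : ℂ)⁻¹ * expFun ((b : ℤ) : ℝ) x

theorem inner_expVec (B : Finset ℤ) (x y : ℝ) :
    inner ℂ (expVec B x) (expVec B y) = mask B (y - x) := by
  have hsq : ((B.card : ℂ))⁻¹ = ((√B.card : ℝ) : ℂ)⁻¹ * ((√B.card : ℝ) : ℂ)⁻¹ := by
    rw [← mul_inv, ← Complex.ofReal_mul, Real.mul_self_sqrt (Nat.cast_nonneg _),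
      Complex.ofReal_natCast]
  simp only [expVec, PiLp.inner_apply, RCLike.inner_apply, map_mul, map_inv₀, Complex.conj_ofReal,
    mask, Finset.mul_sum, hsq, expFun_sub_right]
  rw [← Finset.sum_coe_sort B]
  exact Finset.sum_congr rfl fun b _ ↦ by ring

theorem norm_expVec (hB : B.Nonempty) (x : ℝ) : ‖expVec B x‖ = 1 := by
  rw [norm_eq_sqrt_re_inner (𝕜 := ℂ), inner_expVec, sub_self, mask_zero hB]
  simp

namespace IsHadamardTriple

theorem one_lt (h : IsHadamardTriple N B L) : (1 : ℝ) < N :=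
  Nat.one_lt_cast.2 h.1

theorem natCast_ne_zero (h : IsHadamardTriple N B L) : (N : ℝ) ≠ 0 :=
  (zero_lt_one.trans h.one_lt).ne'

theorem nonempty (h : IsHadamardTriple N B L) : B.Nonempty :=
  Finset.card_pos.1 (by have := h.2.1; omega)

theorem mask_sub_div_eq_zero (h : IsHadamardTriple N B L) {l l' : ℤ} (hl : l ∈ L) (hl' : l' ∈ L)
    (hne : l ≠ l') : mask B ((l - l') / N) = 0 := by
  rw [mask, mul_eq_zero]
  right
  rw [← h.2.2.2 l hl l' hl' hne]
  refine Finset.sum_congr rfl fun b _ ↦ ?_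
  rw [expFun]
  push_cast
  ring_nf

theorem orthonormal_expVec (h : IsHadamardTriple N B L) :
    Orthonormal ℂ fun l : L ↦ expVec B (-((l : ℤ) / N : ℝ)) := by
  refine ⟨fun l ↦ norm_expVec h.nonempty _, fun l l' hne ↦ ?_⟩
  beta_reduce
  rw [inner_expVec, ← h.mask_sub_div_eq_zero l.2 l'.2 (Subtype.coe_ne_coe.2 hne)]
  ring_nf

theorem sum_sq_norm_mask (h : IsHadamardTriple N B L) (x : ℝ) :
    ∑ l ∈ L, ‖mask B ((x + l) / N)‖ ^ 2 = 1 := by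
  have hparseval := sum_sq_norm_inner_eq_of_card_eq_finrank h.orthonormal_expVec
    (by simpa using h.2.2.1) (expVec B (x / N))
  rw [norm_expVec h.nonempty, one_pow] at hparseval
  rw [← hparseval, ← Finset.sum_coe_sort L]
  refine Finset.sum_congr rfl fun l _ ↦ ?_
  rw [inner_expVec]
  ring_nf

theorem eq_of_sub_div_mem_dualGroup (h : IsHadamardTriple N B L) {l l' : ℤ} (hl : l ∈ L)
    (hl' : l' ∈ L) (hmem : ((l : ℝ) - l') / N ∈ dualGroup B) : l = l' := by
  by_contra hne
  have hper := mask_add_of_mem_dualGroup hmem 0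
  rw [zero_add, h.mask_sub_div_eq_zero hl hl' hne, mask_zero h.nonempty] at hper
  exact zero_ne_one hper

theorem digit_unique (h : IsHadamardTriple N B L) {g g' : ℝ} {l l' : ℤ} (hl : l ∈ L) (hl' : l' ∈ L)
    (hg : g - g' ∈ dualGroup B) (heq : N * g + l = N * g' + l') : g = g' ∧ l = l' := by
  have hN : (N : ℝ) ≠ 0 := h.natCast_ne_zero
  have hll : l = l' := by
    refine h.eq_of_sub_div_mem_dualGroup hl hl' (neg_mem_iff.1 ?_)
    rwa [show -(((l : ℝ) - l') / N) = g - g' by field_simp; linarith]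
  subst hll
  exact ⟨mul_left_cancel₀ hN (add_right_cancel heq), rfl⟩

end IsHadamardTriple

end HadamardTriple

section SelfSimilarSet

variable {N : ℕ} {L : Finset ℤ}

theorem norm_digit_div_pow_le (hN : 2 ≤ N) {l : ℤ} (hl : l ∈ L) (i : ℕ) :
    ‖(l : ℝ) / (N : ℝ) ^ (i + 1)‖ ≤ (∑ l ∈ L, |(l : ℝ)|) * (1 / 2) ^ i := by
  have hN' : (2 : ℝ) ≤ N := mod_cast hN
  rw [norm_div, Real.norm_eq_abs, norm_pow, Real.norm_natCast, one_div, inv_pow, div_eq_mul_inv]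
  gcongr
  · exact Finset.single_le_sum (f := fun l : ℤ ↦ |(l : ℝ)|) (fun _ _ ↦ abs_nonneg _) hl
  · exact (pow_le_pow_left₀ zero_le_two hN' i).trans
      (pow_le_pow_right₀ (one_le_two.trans hN') i.le_succ)

theorem summable_digit_div_pow (hN : 2 ≤ N) {a : ℕ → ℤ} (ha : ∀ i, a i ∈ L) :
    Summable fun i ↦ (a i : ℝ) / (N : ℝ) ^ (i + 1) :=
  .of_norm_bounded (summable_geometric_two.mul_left _) fun i ↦ norm_digit_div_pow_le hN (ha i) i

theorem isCompact_KsetZ (hN : 2 ≤ N) (L : Finset ℤ) : IsCompact (KsetZ N L) := by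
  have hrange : KsetZ N L =
      Set.range fun a : ℕ → L ↦ ∑' i, ((a i : ℤ) : ℝ) / (N : ℝ) ^ (i + 1) := by
    ext x
    constructor
    · rintro ⟨a, ha, rfl⟩
      exact ⟨fun i ↦ ⟨a i, ha i⟩, rfl⟩
    · rintro ⟨a, rfl⟩
      exact ⟨fun i ↦ a i, fun i ↦ (a i).2, rfl⟩
  rw [hrange]
  refine isCompact_range (continuous_tsum (fun i ↦ ?_) (summable_geometric_two.mul_left _)
    fun i a ↦ norm_digit_div_pow_le hN (a i).2 i)
  exact ((continuous_of_discreteTopology (f := fun l : L ↦ ((l : ℤ) : ℝ))).comp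
    (continuous_apply i)).div_const _

theorem zero_mem_KsetZ (N : ℕ) (hL0 : 0 ∈ L) : (0 : ℝ) ∈ KsetZ N L :=
  ⟨fun _ ↦ 0, fun _ ↦ hL0, by simp⟩

theorem mul_tsum_digit_div_pow (hN : 2 ≤ N) {a : ℕ → ℤ} (ha : ∀ i, a i ∈ L) :
    (N : ℝ) * ∑' i, (a i : ℝ) / (N : ℝ) ^ (i + 1) =
      a 0 + ∑' i, (a (i + 1) : ℝ) / (N : ℝ) ^ (i + 1) := by
  have hN0 : (N : ℝ) ≠ 0 := by positivity
  have hshift (k : ℤ) (i : ℕ) : (N : ℝ) * (k / (N : ℝ) ^ (i + 1)) = k / (N : ℝ) ^ i := by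
    rw [pow_succ', ← mul_div_assoc, mul_div_mul_left _ _ hN0]
  rw [(summable_digit_div_pow hN ha).tsum_eq_zero_add, mul_add, ← tsum_mul_left]
  simp only [hshift, pow_zero, div_one]

theorem mem_KsetZ_iff_exists_mul_sub_mem (hN : 2 ≤ N) {x : ℝ} :
    x ∈ KsetZ N L ↔ ∃ l ∈ L, (N : ℝ) * x - l ∈ KsetZ N L := by
  constructor
  · rintro ⟨a, ha, rfl⟩
    exact ⟨a 0, ha 0, fun i ↦ a (i + 1), fun i ↦ ha _,
      by rw [mul_tsum_digit_div_pow hN ha, add_sub_cancel_left]⟩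
  · rintro ⟨l, hl, a, ha, hx⟩
    let c : ℕ → ℤ := fun i ↦ Nat.casesOn i l a
    have hc : ∀ i, c i ∈ L := by
      rintro (_ | i)
      exacts [hl, ha i]
    refine ⟨c, hc, mul_left_cancel₀ (by positivity : (N : ℝ) ≠ 0) ?_⟩
    rw [mul_tsum_digit_div_pow hN hc]
    exact sub_eq_iff_eq_add'.1 hx

theorem add_div_mem_KsetZ (hN : 2 ≤ N) {x : ℝ} (hx : x ∈ KsetZ N L) {l : ℤ} (hl : l ∈ L) :
    (x + l) / N ∈ KsetZ N L :=
  (mem_KsetZ_iff_exists_mul_sub_mem hN).2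
    ⟨l, hl, by rwa [mul_div_cancel₀ _ (by positivity), add_sub_cancel_right]⟩

end SelfSimilarSet

section FrequencySet

open scoped Pointwise

/-- The set `N·Λ + L`, one step in the construction of the spectrum. -/
def digitExpand (N : ℕ) (L : Finset ℤ) (Λ : Set ℝ) : Set ℝ :=
  {y | ∃ x ∈ Λ, ∃ l ∈ L, y = (N : ℝ) * x + l}

variable {N : ℕ} {B L : Finset ℤ}

theorem digitExpand_iUnion {ι : Sort*} (Λ : ι → Set ℝ) :
    digitExpand N L (⋃ i, Λ i) = ⋃ i, digitExpand N L (Λ i) := by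
  ext y
  simp only [digitExpand, Set.mem_iUnion, Set.mem_ofPred_eq, ← exists_and_right]
  exact exists_comm

theorem digitExpand_iUnion_eq_self {Λ : ℕ → Set ℝ} (hΛ0 : Λ 0 ⊆ digitExpand N L (Λ 0))
    (hΛ : ∀ n, Λ (n + 1) = digitExpand N L (Λ n)) :
    digitExpand N L (⋃ n, Λ n) = ⋃ n, Λ n := by
  simp only [digitExpand_iUnion, ← hΛ] at hΛ0 ⊢
  rw [← Set.union_iUnion_nat_succ Λ, eq_comm, Set.union_eq_right]
  exact hΛ0.trans (Set.subset_iUnion (fun n ↦ Λ (n + 1)) 0)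

theorem digitExpand_subset_dualGroup {Λ : Set ℝ} (hΛ : Λ ⊆ dualGroup B) :
    digitExpand N L Λ ⊆ dualGroup B := by
  rintro _ ⟨x, hx, l, -, rfl⟩
  exact add_mem (natCast_mul_mem_dualGroup (hΛ hx) N) (intCast_mem_dualGroup B l)

theorem iUnion_subset_dualGroup {Λ : ℕ → Set ℝ} (hΛ0 : Λ 0 ⊆ dualGroup B)
    (hΛ : ∀ n, Λ (n + 1) = digitExpand N L (Λ n)) : ⋃ n, Λ n ⊆ dualGroup B := by
  refine Set.iUnion_subset fun n ↦ ?_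
  induction n with
  | zero => exact hΛ0
  | succ n ih => exact hΛ n ▸ digitExpand_subset_dualGroup ih

/-- `x ↦ N x - ℓ`, with `ℓ` the first digit of `x`, is an injective self-map of the finite set
`K(N,L) ∩ ℤ/d`, hence surjective. -/
theorem IsHadamardTriple.neg_inter_subset_digitExpand (h : IsHadamardTriple N B L) {b : ℤ}
    (hb : b ∈ B) (hb0 : b ≠ 0) :
    -(KsetZ N L ∩ dualGroup B) ⊆ digitExpand N L (-(KsetZ N L ∩ dualGroup B)) := by
  have : Finite ↑(KsetZ N L ∩ dualGroup B) :=
    finite_inter_dualGroup hb hb0 (isCompact_KsetZ h.1 L)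
  have hshift (x : ↑(KsetZ N L ∩ dualGroup B)) :
      ∃ y : ↑(KsetZ N L ∩ dualGroup B), ∃ l ∈ L, (y : ℝ) = N * x - l := by
    obtain ⟨l, hl, hxl⟩ := (mem_KsetZ_iff_exists_mul_sub_mem h.1).1 x.2.1
    exact ⟨⟨_, hxl, sub_mem (natCast_mul_mem_dualGroup x.2.2 N) (intCast_mem_dualGroup B l)⟩,
      l, hl, rfl⟩
  choose shift digit hdigit hshift using hshift
  have hinj : shift.Injective := by
    intro x y hxy
    have heq : (N : ℝ) * x + digit y = N * y + digit x := by
      have := hshift x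
      rw [hxy, hshift y] at this
      linarith
    exact Subtype.ext (h.digit_unique (hdigit y) (hdigit x) (sub_mem x.2.2 y.2.2) heq).1
  intro z hz
  obtain ⟨x, hx⟩ := Finite.injective_iff_surjective.1 hinj ⟨-z, hz⟩
  refine ⟨-x, by rw [Set.mem_neg, neg_neg]; exact x.2, digit x, hdigit x, ?_⟩
  have := hshift x
  rw [hx] at this
  dsimp only at this
  linarith

theorem IsHadamardTriple.bijective_digitExpand (h : IsHadamardTriple N B L) {G : Set ℝ}
    (hG : G ⊆ dualGroup B) (hGL : digitExpand N L G = G) :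
    Function.Bijective fun p : L × G ↦
      (⟨N * p.2 + (p.1 : ℤ), hGL.le ⟨p.2, p.2.2, p.1, p.1.2, rfl⟩⟩ : G) := by
  constructor
  · rintro ⟨l, g⟩ ⟨l', g'⟩ heq
    obtain ⟨hg, hl⟩ := h.digit_unique l.2 l'.2 (sub_mem (hG g.2) (hG g'.2))
      (congrArg Subtype.val heq)
    exact Prod.ext (Subtype.ext hl) (Subtype.ext hg)
  · rintro ⟨y, hy⟩
    obtain ⟨x, hx, l, hl, rfl⟩ := hGL.ge hy
    exact ⟨⟨⟨l, hl⟩, ⟨x, hx⟩⟩, rfl⟩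

end FrequencySet

section RefinementEquation

variable {N : ℕ} {B L : Finset ℤ} {φ : ℝ → ℂ} {G : Set ℝ}

namespace IsHadamardTriple

theorem eq_zero_of_abs_mul_sub_lt_pow (h : IsHadamardTriple N B L)
    (hφ : ∀ x, φ (N * x) = mask B x * φ x) (hG : G ⊆ dualGroup B) (hGL : digitExpand N L G = G)
    {b : ℤ} (hb : b ∈ B) (hb0 : b ≠ 0) (n : ℕ) {x y : ℝ} (hx : x ∈ G) (hy : y ∈ G) (hxy : x ≠ y)
    (hlt : |(b : ℝ) * (x - y)| < (N : ℝ) ^ n) : φ (x - y) = 0 := by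
  have hN : (0 : ℝ) < N := zero_lt_one.trans h.one_lt
  induction n generalizing x y with
  | zero =>
    exact absurd (sub_eq_zero.1 (eq_zero_of_mem_dualGroup_of_abs_mul_lt_one hb hb0
      (sub_mem (hG hx) (hG hy)) (by rwa [pow_zero] at hlt))) hxy
  | succ n ih =>
    obtain ⟨x', hx', l, hl, rfl⟩ := hGL.ge hx
    obtain ⟨y', hy', l', hl', rfl⟩ := hGL.ge hy
    have hsub : N * x' + l - (N * y' + l') = N * (((l : ℝ) - l') / N + (x' - y')) := by
      field_simp
      ring
    obtain rfl | hne := eq_or_ne l l'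
    · rw [sub_self, zero_div, zero_add] at hsub
      rw [hsub, mul_left_comm, abs_mul, Nat.abs_cast, pow_succ'] at hlt
      rw [hsub, hφ, ih hx' hy' (fun heq ↦ hxy (by rw [heq])) (lt_of_mul_lt_mul_left hlt hN.le),
        mul_zero]
    · rw [hsub, hφ, mask_add_of_mem_dualGroup (sub_mem (hG hx') (hG hy')),
        h.mask_sub_div_eq_zero hl hl' hne, zero_mul]

theorem pairwise_sub_eq_zero (h : IsHadamardTriple N B L)
    (hφ : ∀ x, φ (N * x) = mask B x * φ x) (hG : G ⊆ dualGroup B) (hGL : digitExpand N L G = G)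
    {b : ℤ} (hb : b ∈ B) (hb0 : b ≠ 0) : G.Pairwise fun x y ↦ φ (x - y) = 0 := by
  intro x hx y hy hxy
  obtain ⟨n, hn⟩ := pow_unbounded_of_one_lt |(b : ℝ) * (x - y)| h.one_lt
  exact h.eq_zero_of_abs_mul_sub_lt_pow hφ hG hGL hb hb0 n hx hy hxy hn

theorem eq_sum_mask_mul_of_hasSum (h : IsHadamardTriple N B L)
    (hφ : ∀ x, φ (N * x) = mask B x * φ x) (hG : G ⊆ dualGroup B) (hGL : digitExpand N L G = G)
    {q : ℝ → ℝ} (hq : ∀ x, HasSum (fun g : G ↦ ‖φ (x + g)‖ ^ 2) (q x)) (x : ℝ) :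
    q x = ∑ l ∈ L, ‖mask B ((x + l) / N)‖ ^ 2 * q ((x + l) / N) := by
  have hN : (N : ℝ) ≠ 0 := h.natCast_ne_zero
  have hterm (l : ℤ) (g : G) : ‖φ (x + (N * g + l))‖ ^ 2 =
      ‖mask B ((x + l) / N)‖ ^ 2 * ‖φ ((x + l) / N + g)‖ ^ 2 := by
    rw [show x + (N * g + l) = N * ((x + l) / N + g) by field_simp; ring, hφ, norm_mul, mul_pow,
      mask_add_of_mem_dualGroup (hG g.2)]
  have hprod : HasSum (fun p : L × G ↦ ‖φ (x + (N * p.2 + (p.1 : ℤ)))‖ ^ 2) (q x) :=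
    (Equiv.ofBijective _ (h.bijective_digitExpand hG hGL)).hasSum_iff.2 (hq x)
  have hfiber := hprod.prod_fiberwise fun l ↦ by
    simpa only [hterm] using (hq ((x + (l : ℤ)) / N)).mul_left (‖mask B ((x + (l : ℤ)) / N)‖ ^ 2)
  rw [hfiber.unique (hasSum_fintype _), ← Finset.sum_coe_sort L]

end IsHadamardTriple

end RefinementEquation

section MinimumPrinciple

theorem eq_of_sum_mul_eq_of_le {ι : Type*} {s : Finset ι} {w a : ι → ℝ} {c : ℝ}
    (hw : ∀ i ∈ s, 0 ≤ w i) (hw1 : ∑ i ∈ s, w i = 1) (ha : ∀ i ∈ s, c ≤ a i)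
    (hsum : ∑ i ∈ s, w i * a i = c) {i : ι} (hi : i ∈ s) (hwi : w i ≠ 0) : a i = c := by
  have hle : ∀ j ∈ s, w j * c ≤ w j * a j := fun j hj ↦
    mul_le_mul_of_nonneg_left (ha j hj) (hw j hj)
  have heq : ∑ j ∈ s, w j * c = ∑ j ∈ s, w j * a j := by rw [← Finset.sum_mul, hw1, one_mul, hsum]
  exact (mul_left_cancel₀ hwi ((Finset.sum_eq_sum_iff_of_le hle).1 heq i hi)).symm

theorem eq_const_of_infinite_inter_preimage {𝕜 E : Type*} [NontriviallyNormedField 𝕜]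
    [PreconnectedSpace 𝕜] [NormedAddCommGroup E] [NormedSpace 𝕜 E] {f : 𝕜 → E}
    (hf : ∀ x, AnalyticAt 𝕜 f x) {K : Set 𝕜} (hK : IsCompact K) {c : E}
    (hinf : (K ∩ f ⁻¹' {c}).Infinite) (x : 𝕜) : f x = c := by
  obtain ⟨z, -, hz⟩ := hinf.exists_accPt_of_subset_isCompact hK Set.inter_subset_left
  have hfreq := (accPt_iff_frequently_nhdsNE.1 hz).mono fun y hy ↦ hy.2
  exact AnalyticOnNhd.eqOn_of_preconnected_of_frequently_eq (g := fun _ ↦ c) (fun x _ ↦ hf x)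
    (fun _ _ ↦ analyticAt_const) isPreconnected_univ (Set.mem_univ z) hfreq (Set.mem_univ x)

namespace IsHadamardTriple

variable {N : ℕ} {B L : Finset ℤ}

theorem card_le_sum_sq_norm_mask (h : IsHadamardTriple N B L) {F : Finset ℝ}
    (hF : ∀ x ∈ F, ∀ y ∈ F, x - y ∈ dualGroup B → x = y) {ρ : ℝ → ℝ}
    (hρ : ∀ x ∈ F, ∀ l ∈ L, mask B ((x + l) / N) ≠ 0 →
      ρ ((x + l) / N) ∈ F ∧ ρ ((x + l) / N) - (x + l) / N ∈ dualGroup B) :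
    (F.card : ℝ) ≤ ∑ x ∈ F, ‖mask B x‖ ^ 2 := by
  classical
  have hN : (N : ℝ) ≠ 0 := h.natCast_ne_zero
  let S : Finset (ℝ × ℤ) := (F ×ˢ L).filter fun p ↦ mask B ((p.1 + p.2) / N) ≠ 0
  have hS {p : ℝ × ℤ} (hp : p ∈ S) : p.1 ∈ F ∧ p.2 ∈ L ∧ mask B ((p.1 + p.2) / N) ≠ 0 := by
    simpa only [S, Finset.mem_filter, Finset.mem_product, and_assoc] using hp
  have hρS {p : ℝ × ℤ} (hp : p ∈ S) := hρ p.1 (hS hp).1 p.2 (hS hp).2.1 (hS hp).2.2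
  have hinj : Set.InjOn (fun p : ℝ × ℤ ↦ ρ ((p.1 + p.2) / N)) S := by
    rintro ⟨x, l⟩ hp ⟨y, l'⟩ hp' (heq : ρ ((x + l) / N) = ρ ((y + l') / N))
    have hdiff : (x + l) / N - (y + l') / N ∈ dualGroup B := by
      simpa [heq] using sub_mem (hρS hp').2 (hρS hp).2
    obtain rfl : x = y := hF x (hS hp).1 y (hS hp').1
      (sub_mem_dualGroup_of_add_div_sub_mem hN hdiff)
    rw [← sub_div, add_sub_add_left_eq_sub] at hdiff
    obtain rfl : l = l' := h.eq_of_sub_div_mem_dualGroup (hS hp).2.1 (hS hp').2.1 hdiff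
    rfl
  calc (F.card : ℝ) = ∑ p ∈ F ×ˢ L, ‖mask B ((p.1 + p.2) / N)‖ ^ 2 := by
        simp [Finset.sum_product, h.sum_sq_norm_mask]
    _ = ∑ p ∈ S, ‖mask B ((p.1 + p.2) / N)‖ ^ 2 := by
        rw [Finset.sum_filter_of_ne]
        exact fun p _ hp hzero ↦ hp (by simp [hzero])
    _ = ∑ p ∈ S, ‖mask B (ρ ((p.1 + p.2) / N))‖ ^ 2 := by
        refine Finset.sum_congr rfl fun p hp ↦ ?_
        rw [← mask_add_of_mem_dualGroup (hρS hp).2, add_sub_cancel]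
    _ = ∑ x ∈ S.image fun p ↦ ρ ((p.1 + p.2) / N), ‖mask B x‖ ^ 2 :=
        (Finset.sum_image (f := fun x ↦ ‖mask B x‖ ^ 2) hinj).symm
    _ ≤ ∑ x ∈ F, ‖mask B x‖ ^ 2 :=
        Finset.sum_le_sum_of_subset_of_nonneg
          (Finset.image_subset_iff.2 fun p hp ↦ (hρS hp).1) fun _ _ _ ↦ by positivity

/-- Every `x ∈ E` distributes the total weight `1` among its successors `(x + ℓ) / N`, which are
pairwise distinct modulo `ℤ/d`. Hence the weights `‖mask B‖ ^ 2 ≤ 1` of the classes of `E` modulo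
`ℤ/d` add up to at least the number of these classes. -/
theorem norm_mask_eq_one_of_finite_invariant (h : IsHadamardTriple N B L) {E : Set ℝ}
    (hE : E.Finite) (hinv : ∀ x ∈ E, ∀ l ∈ L, mask B ((x + l) / N) ≠ 0 → (x + l) / N ∈ E)
    {x : ℝ} (hx : x ∈ E) : ‖mask B x‖ = 1 := by
  obtain ⟨F, hFE, hbij⟩ := Set.exists_subset_bijOn E (QuotientAddGroup.mk (s := dualGroup B))
  have hrep : ∀ y ∈ E, ∃ z ∈ F, z - y ∈ dualGroup B := fun y hy ↦ by
    obtain ⟨z, hz, hzy⟩ := hbij.surjOn ⟨y, hy, rfl⟩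
    exact ⟨z, hz, by rwa [sub_eq_neg_add, ← QuotientAddGroup.eq, eq_comm]⟩
  choose! ρ hρF hρ using hrep
  lift F to Finset ℝ using hE.subset hFE
  have hcard := h.card_le_sum_sq_norm_mask (F := F) (ρ := ρ)
    (fun y hy z hz hyz ↦ (hbij.injOn hz hy (QuotientAddGroup.eq.2 (by rwa [neg_add_eq_sub]))).symm)
    fun y hy l hl hne ↦ ⟨hρF _ (hinv y (hFE hy) l hl hne), hρ _ (hinv y (hFE hy) l hl hne)⟩
  have hle : ∀ y ∈ F, ‖mask B y‖ ^ 2 ≤ 1 := fun y _ ↦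
    pow_le_one₀ (norm_nonneg _) (norm_mask_le_one B y)
  have hsum : ∑ y ∈ F, ‖mask B y‖ ^ 2 = ∑ y ∈ F, 1 :=
    (Finset.sum_le_sum hle).antisymm (by simpa using hcard)
  have hone := (Finset.sum_eq_sum_iff_of_le hle).1 hsum (ρ x) (hρF x hx)
  rw [← mask_add_of_mem_dualGroup (hρ x hx), add_sub_cancel]
  exact (pow_eq_one_iff_of_nonneg (norm_nonneg _) two_ne_zero).1 hone

theorem exists_mem_KsetZ_mask_eq_zero (h : IsHadamardTriple N B L) (hL0 : 0 ∈ L) :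
    ∃ x ∈ KsetZ N L, mask B x = 0 := by
  have hL : 1 < L.card := h.2.2.1 ▸ h.2.1
  obtain ⟨l, hl, hl0⟩ := Finset.exists_mem_ne hL 0
  refine ⟨_, add_div_mem_KsetZ h.1 (zero_mem_KsetZ N hL0) hl, ?_⟩
  simpa using h.mask_sub_div_eq_zero hl hL0 hl0

/-- If the set of minimizers of `q` on `K(N,L)` is infinite, then `q` is constant by analyticity.
If it is finite, then `|mask B| = 1` there, so that the minimizers lie in `ℤ/d`, where `q ≥ 1`;
hence `q = 1` on `K(N,L)`, every point of `K(N,L)` is a minimizer, and `|mask B| = 1` on `K(N,L)`,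
which contradicts the existence of a zero of the mask there. -/
theorem one_le_of_eq_sum_mask_mul (h : IsHadamardTriple N B L) (hB0 : 0 ∈ B) (hL0 : 0 ∈ L)
    {q : ℝ → ℝ} (hq : ∀ x, AnalyticAt ℝ q x) (hq1 : ∀ x, q x ≤ 1)
    (hq_sum : ∀ x, q x = ∑ l ∈ L, ‖mask B ((x + l) / N)‖ ^ 2 * q ((x + l) / N))
    (hqK : ∀ x ∈ KsetZ N L ∩ dualGroup B, 1 ≤ q x) (x : ℝ) : 1 ≤ q x := by
  have hK := isCompact_KsetZ h.1 L
  have h0K := zero_mem_KsetZ N hL0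
  obtain ⟨x₀, hx₀, hmin⟩ := hK.exists_isMinOn ⟨0, h0K⟩ fun x _ ↦
    (hq x).continuousAt.continuousWithinAt
  rw [isMinOn_iff] at hmin
  have hinv : ∀ y ∈ KsetZ N L ∩ q ⁻¹' {q x₀}, ∀ l ∈ L, mask B ((y + l) / N) ≠ 0 →
      (y + l) / N ∈ KsetZ N L ∩ q ⁻¹' {q x₀} := by
    rintro y ⟨hyK, hy⟩ l hl hne
    refine ⟨add_div_mem_KsetZ h.1 hyK hl, ?_⟩
    exact eq_of_sum_mul_eq_of_le (fun _ _ ↦ by positivity) (h.sum_sq_norm_mask y)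
      (fun l hl ↦ hmin _ (add_div_mem_KsetZ h.1 hyK hl)) ((hq_sum y).symm.trans hy) hl
      (pow_ne_zero 2 (norm_ne_zero_iff.2 hne))
  have hinf : (KsetZ N L ∩ q ⁻¹' {q x₀}).Infinite := by
    intro hfin
    have hone {y : ℝ} (hy : y ∈ KsetZ N L ∩ q ⁻¹' {q x₀}) : ‖mask B y‖ = 1 :=
      h.norm_mask_eq_one_of_finite_invariant hfin hinv hy
    have hqx₀ : 1 ≤ q x₀ := hqK x₀ ⟨hx₀, mem_dualGroup_of_norm_mask_eq_one hB0 (hone ⟨hx₀, rfl⟩)⟩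
    obtain ⟨z, hzK, hz⟩ := h.exists_mem_KsetZ_mask_eq_zero hL0
    have := hone ⟨hzK, ((hq1 z).trans hqx₀).antisymm (hmin z hzK)⟩
    rw [hz, norm_zero] at this
    exact zero_ne_one this
  have hconst := eq_const_of_infinite_inter_preimage hq hK hinf
  calc 1 ≤ q 0 := hqK 0 ⟨h0K, zero_mem _⟩
    _ = q x := (hconst 0).trans (hconst x).symm

end IsHadamardTriple

end MinimumPrinciple

section SelfSimilarMeasure

/-- The Fourier–Stieltjes transform `x ↦ ∫ e^{2πixt} dμ(t)`, normalized without the minus sign so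
that it is the inner product of exponentials in `L²(μ)`. -/
noncomputable def fourierStieltjes (μ : Measure ℝ) (x : ℝ) : ℂ :=
  ∫ t, expFun x t ∂μ

theorem integrable_expFun (μ : Measure ℝ) [IsFiniteMeasure μ] (x : ℝ) : Integrable (expFun x) μ :=
  .of_bound (continuous_expFun x).aestronglyMeasurable 1 (.of_forall fun t ↦ (norm_expFun x t).le)

theorem fourierStieltjes_zero (μ : Measure ℝ) [IsProbabilityMeasure μ] :
    fourierStieltjes μ 0 = 1 := by
  simp [fourierStieltjes]

theorem fourierStieltjes_eq_charFun (μ : Measure ℝ) (x : ℝ) :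
    fourierStieltjes μ x = charFun μ (2 * Real.pi * x) := by
  rw [fourierStieltjes, charFun_apply_real]
  refine integral_congr_ae (.of_forall fun t ↦ ?_)
  simp only [expFun]
  push_cast
  ring_nf

theorem ext_of_fourierStieltjes {μ ν : Measure ℝ} [IsFiniteMeasure μ] [IsFiniteMeasure ν]
    (h : ∀ x, fourierStieltjes μ x = fourierStieltjes ν x) : μ = ν := by
  refine Measure.ext_of_charFun (funext fun s ↦ ?_)
  have hs := h (s / (2 * Real.pi))
  rwa [fourierStieltjes_eq_charFun, fourierStieltjes_eq_charFun,
    mul_div_cancel₀ s Real.two_pi_pos.ne'] at hs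

theorem measure_lt_norm_eq_zero {E : Type*} [NormedAddCommGroup E] [MeasurableSpace E]
    [BorelSpace E] [ProperSpace E] {μ : Measure E} [IsFiniteMeasure μ] {R : ℝ}
    (h : ∀ r ≥ R, μ {x | r < ‖x‖} ≤ μ {x | r + 1 < ‖x‖}) : μ {x | R < ‖x‖} = 0 := by
  have hle (k : ℕ) : μ {x | R < ‖x‖} ≤ μ {x | R + k < ‖x‖} := by
    induction k with
    | zero => simp
    | succ k ih =>
      refine ih.trans ((h _ (le_add_of_nonneg_right k.cast_nonneg)).trans_eq ?_)
      rw [Nat.cast_succ, add_assoc]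
  have hlim : Tendsto (fun r : ℝ ↦ μ {x | r < ‖x‖}) atTop (𝓝 0) := by
    simpa using tendsto_measure_norm_gt_of_isTightMeasureSet (isTightMeasureSet_singleton (μ := μ))
  exact nonpos_iff_eq_zero.1 (ge_of_tendsto'
    (hlim.comp (tendsto_atTop_add_const_left _ R tendsto_natCast_atTop_atTop)) hle)

/-- `μ` is invariant under the iterated function system `x ↦ (x + b) / N`, `b ∈ B`, with equal
weights. -/
def IsSelfSimilarMeasure (N : ℕ) (B : Finset ℤ) (μ : Measure ℝ) : Prop :=
  μ = (B.card : ℝ≥0∞)⁻¹ • ∑ b ∈ B, μ.map fun x : ℝ ↦ (x + b) / N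

namespace IsSelfSimilarMeasure

variable {N : ℕ} {B : Finset ℤ} {μ : Measure ℝ}

theorem fourierStieltjes_mul [IsFiniteMeasure μ] (hμ : IsSelfSimilarMeasure N B μ)
    (hN : (N : ℝ) ≠ 0) (x : ℝ) :
    fourierStieltjes μ (N * x) = mask B x * fourierStieltjes μ x := by
  have hmap (b : ℤ) : ∫ t, expFun (N * x) t ∂(μ.map fun t : ℝ ↦ (t + b) / N) =
      expFun b x * ∫ t, expFun x t ∂μ := by
    rw [integral_map (by fun_prop) (continuous_expFun _).aestronglyMeasurable,
      ← integral_const_mul]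
    refine integral_congr_ae (.of_forall fun t ↦ ?_)
    beta_reduce
    rw [expFun_comm b, ← expFun_add_right, expFun_eq_fourierChar, expFun_eq_fourierChar, add_comm t]
    field_simp
  rw [fourierStieltjes]
  rw [IsSelfSimilarMeasure] at hμ
  nth_rewrite 1 [hμ]
  rw [integral_smul_measure, integral_finsetSum_measure fun b _ ↦ integrable_expFun _ _,
    Finset.sum_congr rfl fun b _ ↦ hmap b, ← Finset.sum_mul, mask, fourierStieltjes,
    ENNReal.toReal_inv, ENNReal.toReal_natCast, Complex.real_smul, ← mul_assoc, Complex.ofReal_inv,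
    Complex.ofReal_natCast]

theorem measure_lt_norm_le (hμ : IsSelfSimilarMeasure N B μ) (hN : 0 < N) (r : ℝ) :
    μ {t | r < ‖t‖} ≤ μ {t | N * r - ∑ b ∈ B, |(b : ℝ)| < ‖t‖} := by
  have hpre : ∀ b ∈ B, (μ.map fun t : ℝ ↦ (t + b) / N) {t | r < ‖t‖} ≤
      μ {t | N * r - ∑ b ∈ B, |(b : ℝ)| < ‖t‖} := by
    intro b hb
    rw [Measure.map_apply (by fun_prop) (measurableSet_lt measurable_const measurable_norm)]
    refine measure_mono fun t (ht : r < ‖(t + b) / N‖) ↦ ?_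
    rw [norm_div, Real.norm_natCast, lt_div_iff₀' (Nat.cast_pos.2 hN)] at ht
    have hbM := Finset.single_le_sum (f := fun b : ℤ ↦ |(b : ℝ)|) (fun _ _ ↦ abs_nonneg _) hb
    have htri := norm_add_le t b
    rw [Real.norm_eq_abs (b : ℝ)] at htri
    simp only [Set.mem_ofPred_eq]
    linarith
  calc μ {t | r < ‖t‖}
      = (B.card : ℝ≥0∞)⁻¹ * ∑ b ∈ B, (μ.map fun t : ℝ ↦ (t + b) / N) {t | r < ‖t‖} := by
        rw [IsSelfSimilarMeasure] at hμ
        nth_rewrite 1 [hμ]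
        rw [Measure.smul_apply, Measure.finsetSum_apply, smul_eq_mul]
    _ ≤ (B.card : ℝ≥0∞)⁻¹ * (B.card * μ {t | N * r - ∑ b ∈ B, |(b : ℝ)| < ‖t‖}) := by
        gcongr
        rw [← nsmul_eq_mul]
        exact Finset.sum_le_card_nsmul _ _ _ hpre
    _ ≤ μ {t | N * r - ∑ b ∈ B, |(b : ℝ)| < ‖t‖} := by
        rw [← mul_assoc]
        exact mul_le_of_le_one_left' (ENNReal.inv_mul_le_one _)

theorem exists_ae_norm_le [IsFiniteMeasure μ] (hμ : IsSelfSimilarMeasure N B μ) (hN : 2 ≤ N) :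
    ∃ R, ∀ᵐ t ∂μ, ‖t‖ ≤ R := by
  have hN' : (2 : ℝ) ≤ N := mod_cast hN
  have hM : 0 ≤ ∑ b ∈ B, |(b : ℝ)| := Finset.sum_nonneg fun _ _ ↦ abs_nonneg _
  refine ⟨∑ b ∈ B, |(b : ℝ)| + 1, ?_⟩
  simp only [ae_iff, not_le]
  refine measure_lt_norm_eq_zero fun r hr ↦ (hμ.measure_lt_norm_le (by omega) r).trans ?_
  refine measure_mono fun t (ht : _ < ‖t‖) ↦ lt_of_le_of_lt ?_ ht
  nlinarith

end IsSelfSimilarMeasure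

end SelfSimilarMeasure

section Projections

variable {𝕜 E ι : Type*} [RCLike 𝕜] [NormedAddCommGroup E] [InnerProductSpace 𝕜 E]

theorem hasSum_sq_norm_inner_hilbertBasis (b : HilbertBasis ι 𝕜 E) (x : E) :
    HasSum (fun i ↦ ‖inner 𝕜 (b i) x‖ ^ 2) (‖x‖ ^ 2) := by
  rw [← RCLike.hasSum_ofReal (𝕜 := 𝕜)]
  convert b.hasSum_inner_mul_inner x x using 1
  · ext i
    rw [← inner_conj_symm x (b i), RCLike.conj_mul]
    push_cast
    rfl
  · rw [inner_self_eq_norm_sq_to_K]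
    push_cast
    rfl

theorem eq_zero_of_mem_topologicalClosure_span_of_inner_eq_zero {v : ι → E} {w : E}
    (hw : w ∈ (Submodule.span 𝕜 (Set.range v)).topologicalClosure)
    (hv : ∀ i, inner 𝕜 (v i) w = 0) : w = 0 := by
  have hspan : Submodule.span 𝕜 (Set.range v) ≤ (𝕜 ∙ w)ᗮ := by
    rw [Submodule.span_le, Set.range_subset_iff]
    exact fun i ↦ Submodule.mem_orthogonal_singleton_iff_inner_left.2 (hv i)
  exact inner_self_eq_zero.1 (Submodule.mem_orthogonal_singleton_iff_inner_left.1
    (Submodule.topologicalClosure_minimal _ hspan (Submodule.isClosed_orthogonal _) hw))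

theorem hasSum_sq_norm_inner_starProjection [CompleteSpace E] {v : ι → E} (hv : Orthonormal 𝕜 v)
    (x : E) :
    HasSum (fun i ↦ ‖inner 𝕜 (v i) x‖ ^ 2)
      (‖(Submodule.span 𝕜 (Set.range v)).topologicalClosure.starProjection x‖ ^ 2) := by
  set V := (Submodule.span 𝕜 (Set.range v)).topologicalClosure
  have hmem (i : ι) : v i ∈ V :=
    Submodule.le_topologicalClosure _ (Submodule.subset_span (Set.mem_range_self i))
  let v' (i : ι) : V := ⟨v i, hmem i⟩
  have hv' : Orthonormal 𝕜 v' := V.subtypeₗᵢ.orthonormal_comp_iff.1 hv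
  have hbot : (Submodule.span 𝕜 (Set.range v'))ᗮ = ⊥ := by
    rw [Submodule.eq_bot_iff]
    refine fun w hw ↦ Subtype.ext
      (eq_zero_of_mem_topologicalClosure_span_of_inner_eq_zero w.2 fun i ↦ ?_)
    exact (Submodule.mem_orthogonal _ _).1 hw _ (Submodule.subset_span (Set.mem_range_self i))
  have hsum := hasSum_sq_norm_inner_hilbertBasis
    (HilbertBasis.mkOfOrthogonalEqBot hv' hbot) (V.orthogonalProjectionOnto x)
  simp only [HilbertBasis.coe_mkOfOrthogonalEqBot,
    Submodule.inner_orthogonalProjectionOnto_eq_of_mem_left] at hsum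
  exact hsum

end Projections

section Analyticity

open scoped BoundedContinuousFunction

theorem exp_boundedContinuousFunction_apply {α 𝔸 : Type*} [TopologicalSpace α] [NormedRing 𝔸]
    [NormedAlgebra ℝ 𝔸] [CompleteSpace 𝔸] (f : α →ᵇ 𝔸) (a : α) :
    NormedSpace.exp f a = NormedSpace.exp (f a) := by
  let eval : (α →ᵇ 𝔸) →+* 𝔸 :=
    { toFun := fun g ↦ g a
      map_one' := rfl
      map_mul' := fun _ _ ↦ rfl
      map_zero' := rfl
      map_add' := fun _ _ ↦ rfl }
  have heval : Continuous eval := (BoundedContinuousFunction.evalCLM ℝ a).continuous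
  let _ : NormedAlgebra ℚ (α →ᵇ 𝔸) := NormedAlgebra.restrictScalars ℚ ℝ _
  let _ : NormedAlgebra ℚ 𝔸 := NormedAlgebra.restrictScalars ℚ ℝ _
  exact NormedSpace.map_exp eval heval f

theorem analyticAt_exp_smul {𝔸 : Type*} [NormedRing 𝔸] [NormedAlgebra ℝ 𝔸] [CompleteSpace 𝔸]
    (a : 𝔸) (x : ℝ) : AnalyticAt ℝ (fun x : ℝ ↦ NormedSpace.exp (x • a)) x :=
  (NormedSpace.exp_analytic (𝕂 := ℝ) (x • a)).comp_of_eq (f := fun x : ℝ ↦ x • a)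
    (analyticAt_id.smul analyticAt_const) rfl

theorem analyticAt_sq_norm (𝕜 : Type*) {E F : Type*} [RCLike 𝕜] [NormedAddCommGroup E]
    [NormedSpace ℝ E] [NormedAddCommGroup F] [InnerProductSpace 𝕜 F] [NormedSpace ℝ F]
    [CompleteSpace F] {f : E → F} {x : E} (hf : AnalyticAt ℝ f x) :
    AnalyticAt ℝ (fun y ↦ ‖f y‖ ^ 2) x :=
  (hf.contDiffAt.norm_sq 𝕜).analyticAt

end Analyticity

section FourierUniqueness

variable {μ : Measure ℝ}

theorem fourierStieltjes_withDensity_ofReal {g : ℝ → ℝ} (hg : AEMeasurable g μ) (x : ℝ) :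
    fourierStieltjes (μ.withDensity fun t ↦ ENNReal.ofReal (g t)) x =
      ∫ t, ((max (g t) 0 : ℝ) : ℂ) * expFun x t ∂μ := by
  rw [fourierStieltjes, integral_withDensity_eq_integral_toReal_smul₀ hg.ennreal_ofReal
    (.of_forall fun _ ↦ ENNReal.ofReal_lt_top)]
  simp only [ENNReal.toReal_ofReal', Complex.real_smul]

theorem integrable_mul_expFun {g : ℝ → ℂ} (hg : Integrable g μ) (x : ℝ) :
    Integrable (fun t ↦ g t * expFun x t) μ :=
  hg.mul_bdd (continuous_expFun x).aestronglyMeasurable (.of_forall fun t ↦ (norm_expFun x t).le)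

theorem ae_eq_zero_of_integral_ofReal_mul_expFun_eq_zero {g : ℝ → ℝ}
    (hg : Integrable g μ) (h : ∀ x, ∫ t, (g t : ℂ) * expFun x t ∂μ = 0) : g =ᵐ[μ] 0 := by
  have hm := hg.aestronglyMeasurable.aemeasurable
  have := isFiniteMeasure_withDensity_ofReal hg.2
  have := isFiniteMeasure_withDensity_ofReal hg.neg.2
  have hpos : Integrable (fun t ↦ ((max (g t) 0 : ℝ) : ℂ)) μ := hg.pos_part.ofReal
  have hneg : Integrable (fun t ↦ ((max (-g t) 0 : ℝ) : ℂ)) μ := hg.neg_part.ofReal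
  have hparts : (μ.withDensity fun t ↦ ENNReal.ofReal (g t)) =
      μ.withDensity fun t ↦ ENNReal.ofReal ((-g) t) := by
    refine ext_of_fourierStieltjes fun x ↦ ?_
    rw [fourierStieltjes_withDensity_ofReal hm, fourierStieltjes_withDensity_ofReal hm.neg,
      ← sub_eq_zero, ← h x]
    simp only [Pi.neg_apply]
    rw [← integral_sub (integrable_mul_expFun hpos x) (integrable_mul_expFun hneg x)]
    refine integral_congr_ae (.of_forall fun t ↦ ?_)
    beta_reduce
    rw [← sub_mul, ← Complex.ofReal_sub, max_zero_sub_eq_self]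
  filter_upwards [(withDensity_eq_iff hm.ennreal_ofReal hm.neg.ennreal_ofReal
    hg.lintegral_lt_top.ne).1 hparts] with t ht
  have ht' := congrArg ENNReal.toReal ht
  rw [ENNReal.toReal_ofReal', ENNReal.toReal_ofReal'] at ht'
  rw [← max_zero_sub_eq_self (g t), ht', Pi.neg_apply, sub_self, Pi.zero_apply]

theorem ae_eq_zero_of_integral_mul_expFun_eq_zero {g : ℝ → ℂ}
    (hg : Integrable g μ) (h : ∀ x, ∫ t, g t * expFun x t ∂μ = 0) : g =ᵐ[μ] 0 := by
  have hg' : Integrable (fun t ↦ conj (g t)) μ :=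
    Complex.conjCLE.toContinuousLinearMap.integrable_comp hg
  have h' (x : ℝ) : ∫ t, conj (g t) * expFun x t ∂μ = 0 := by
    rw [← map_zero conj, ← h (-x), ← integral_conj]
    simp only [map_mul, expFun_neg_left, Complex.conj_conj]
  have hre : (fun t ↦ (g t).re) =ᵐ[μ] 0 := by
    refine ae_eq_zero_of_integral_ofReal_mul_expFun_eq_zero hg.re fun x ↦ ?_
    calc ∫ t, ((g t).re : ℂ) * expFun x t ∂μ
        = ∫ t, 1 / 2 * (g t * expFun x t + conj (g t) * expFun x t) ∂μ :=
          integral_congr_ae (.of_forall fun t ↦ by simp only [Complex.re_eq_add_conj]; ring)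
      _ = 0 := by
          rw [integral_const_mul, integral_add (integrable_mul_expFun hg x)
            (integrable_mul_expFun hg' x), h, h', add_zero, mul_zero]
  have him : (fun t ↦ (g t).im) =ᵐ[μ] 0 := by
    refine ae_eq_zero_of_integral_ofReal_mul_expFun_eq_zero hg.im fun x ↦ ?_
    calc ∫ t, ((g t).im : ℂ) * expFun x t ∂μ
        = ∫ t, 1 / (2 * Complex.I) * (g t * expFun x t - conj (g t) * expFun x t) ∂μ :=
          integral_congr_ae (.of_forall fun t ↦ by simp only [Complex.im_eq_sub_conj]; ring)
      _ = 0 := by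
          rw [integral_const_mul, integral_sub (integrable_mul_expFun hg x)
            (integrable_mul_expFun hg' x), h, h', sub_zero, mul_zero]
  filter_upwards [hre, him] with t hret himt using Complex.ext hret himt

end FourierUniqueness

section SquareIntegrable

open scoped BoundedContinuousFunction

theorem exists_boundedContinuousFunction_ae_eq {μ : Measure ℝ} {E : Type*} [NormedAddCommGroup E]
    {f : ℝ → E} (hf : Continuous f) {R : ℝ} (hR : ∀ᵐ t ∂μ, ‖t‖ ≤ R) :
    ∃ T : ℝ →ᵇ E, T =ᵐ[μ] f := by
  obtain hR0 | hR0 := lt_or_ge R 0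
  · refine ⟨0, hR.mono fun t ht ↦ absurd ht ?_⟩
    exact not_le.2 (hR0.trans_le (norm_nonneg t))
  have hRR : -R ≤ R := neg_le_self hR0
  let fIcc : C(Set.Icc (-R) R, E) := ⟨_, hf.comp continuous_subtype_val⟩
  refine ⟨(BoundedContinuousFunction.mkOfCompact fIcc).compContinuous
    ⟨Set.projIcc (-R) R hRR, continuous_projIcc⟩, ?_⟩
  filter_upwards [hR] with t ht
  simp [fIcc, Set.projIcc_of_mem hRR (abs_le.1 ht)]

variable {μ : Measure ℝ} [IsFiniteMeasure μ]

/-- The exponential `e_x` as an element of `L²(μ)`. -/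
noncomputable def expLp (μ : Measure ℝ) [IsFiniteMeasure μ] (x : ℝ) : Lp ℂ 2 μ :=
  (MemLp.of_bound (continuous_expFun x).aestronglyMeasurable 1
    (.of_forall fun t ↦ (norm_expFun x t).le)).toLp (expFun x)

theorem coeFn_expLp (x : ℝ) : expLp μ x =ᵐ[μ] expFun x :=
  MemLp.coeFn_toLp _

theorem inner_expLp_left (x : ℝ) (f : Lp ℂ 2 μ) :
    inner ℂ (expLp μ x) f = ∫ t, f t * expFun (-x) t ∂μ := by
  rw [L2.inner_def]
  refine integral_congr_ae ?_
  filter_upwards [coeFn_expLp (μ := μ) x] with t ht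
  rw [ht, RCLike.inner_apply, expFun_neg_left]

theorem inner_expLp (x y : ℝ) :
    inner ℂ (expLp μ x) (expLp μ y) = fourierStieltjes μ (y - x) := by
  rw [inner_expLp_left, fourierStieltjes]
  refine integral_congr_ae ?_
  filter_upwards [coeFn_expLp (μ := μ) y] with t ht
  rw [ht, sub_eq_add_neg, expFun_add_left]

theorem topologicalClosure_span_range_expLp :
    (Submodule.span ℂ (Set.range (expLp μ))).topologicalClosure = ⊤ := by
  rw [Submodule.topologicalClosure_eq_top_iff, Submodule.eq_bot_iff]
  refine fun f hf ↦ (Lp.eq_zero_iff_ae_eq_zero).2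
    (ae_eq_zero_of_integral_mul_expFun_eq_zero ((Lp.memLp f).integrable one_le_two) fun x ↦ ?_)
  rw [← neg_neg x, ← inner_expLp_left]
  exact (Submodule.mem_orthogonal _ _).1 hf _ (Submodule.subset_span (Set.mem_range_self _))

theorem expLp_eq_toLp_exp {T : ℝ →ᵇ ℂ} (hT : ∀ᵐ t ∂μ, T t = 2 * Real.pi * Complex.I * t) (x : ℝ) :
    expLp μ x = BoundedContinuousFunction.toLp 2 μ ℝ (NormedSpace.exp (x • T)) := by
  refine Lp.ext ?_
  filter_upwards [coeFn_expLp (μ := μ) x, hT,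
    BoundedContinuousFunction.coeFn_toLp 2 μ ℝ (NormedSpace.exp (x • T))] with t hx ht hexp
  rw [hx, hexp, exp_boundedContinuousFunction_apply, BoundedContinuousFunction.smul_apply, ht,
    ← Complex.exp_eq_exp_ℂ, expFun, Complex.real_smul]
  ring_nf

theorem analyticAt_expLp {R : ℝ} (hR : ∀ᵐ t ∂μ, ‖t‖ ≤ R) (x : ℝ) : AnalyticAt ℝ (expLp μ) x := by
  obtain ⟨T, hT⟩ := exists_boundedContinuousFunction_ae_eq
    (f := fun t : ℝ ↦ 2 * Real.pi * Complex.I * t) (by fun_prop) hR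
  rw [funext (expLp_eq_toLp_exp hT)]
  exact ((BoundedContinuousFunction.toLp 2 μ ℝ).analyticAt _).fun_comp (analyticAt_exp_smul T x)

end SquareIntegrable

section SpectralFunction

/-- The squared length of the orthogonal projection of `e_{-x}` onto the closed span of the
exponentials with frequencies in `Λ`. The sign makes it equal to `∑ g ∈ Λ, ‖μ̂ (x + g)‖ ^ 2` for
orthogonal exponentials. -/
noncomputable def spectralFun (μ : Measure ℝ) [IsFiniteMeasure μ] (Λ : Set ℝ) (x : ℝ) : ℝ :=
  ‖(Submodule.span ℂ (Set.range fun g : Λ ↦ expLp μ g)).topologicalClosure.starProjection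
    (expLp μ (-x))‖ ^ 2

theorem analyticAt_spectralFun {μ : Measure ℝ} [IsFiniteMeasure μ] {R : ℝ}
    (hR : ∀ᵐ t ∂μ, ‖t‖ ≤ R) (Λ : Set ℝ) (x : ℝ) : AnalyticAt ℝ (spectralFun μ Λ) x := by
  have hexp : AnalyticAt ℝ (fun x ↦ expLp μ (-x)) x :=
    (analyticAt_expLp hR (-x)).fun_comp analyticAt_id.neg
  exact analyticAt_sq_norm ℂ (((ContinuousLinearMap.restrictScalars ℝ
    (Submodule.starProjection _)).analyticAt _).fun_comp hexp)

variable {μ : Measure ℝ} [IsProbabilityMeasure μ] {Λ : Set ℝ}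

theorem norm_expLp (x : ℝ) : ‖expLp μ x‖ = 1 := by
  rw [norm_eq_sqrt_re_inner (𝕜 := ℂ), inner_expLp, sub_self, fourierStieltjes_zero, RCLike.one_re,
    Real.sqrt_one]

theorem orthonormal_expLp (hΛ : Λ.Pairwise fun x y ↦ fourierStieltjes μ (x - y) = 0) :
    Orthonormal ℂ fun g : Λ ↦ expLp μ g := by
  refine ⟨fun g ↦ norm_expLp _, fun g g' hgg' ↦ ?_⟩
  beta_reduce
  rw [inner_expLp]
  exact hΛ g'.2 g.2 (Subtype.coe_ne_coe.2 hgg'.symm)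

theorem hasSum_spectralFun (hΛ : Λ.Pairwise fun x y ↦ fourierStieltjes μ (x - y) = 0) (x : ℝ) :
    HasSum (fun g : Λ ↦ ‖fourierStieltjes μ (x + g)‖ ^ 2) (spectralFun μ Λ x) := by
  refine (hasSum_sq_norm_inner_starProjection (orthonormal_expLp hΛ) (expLp μ (-x))).congr_fun
    fun g ↦ ?_
  rw [norm_inner_symm, inner_expLp, sub_neg_eq_add, add_comm]

theorem spectralFun_le_one (x : ℝ) : spectralFun μ Λ x ≤ 1 :=
  pow_le_one₀ (norm_nonneg _)
    ((Submodule.norm_starProjection_apply_le _ _).trans_eq (norm_expLp _))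

theorem spectralFun_eq_one_iff {x : ℝ} : spectralFun μ Λ x = 1 ↔ expLp μ (-x) ∈
    (Submodule.span ℂ (Set.range fun g : Λ ↦ expLp μ g)).topologicalClosure := by
  rw [Submodule.mem_iff_norm_starProjection, norm_expLp, spectralFun,
    pow_eq_one_iff_of_nonneg (norm_nonneg _) two_ne_zero]

theorem spectralFun_eq_one_of_neg_mem {x : ℝ} (hx : -x ∈ Λ) : spectralFun μ Λ x = 1 :=
  spectralFun_eq_one_iff.2
    (Submodule.le_topologicalClosure _ (Submodule.subset_span ⟨⟨-x, hx⟩, rfl⟩))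

theorem isSpectrum_of_spectralFun_eq_one
    (hΛ : Λ.Pairwise fun x y ↦ fourierStieltjes μ (x - y) = 0) (h : ∀ x, spectralFun μ Λ x = 1) :
    IsSpectrum μ Λ := by
  refine ⟨fun g ↦ expLp μ g, fun g ↦ coeFn_expLp _, orthonormal_expLp hΛ, ?_⟩
  rw [eq_top_iff, ← topologicalClosure_span_range_expLp]
  refine Submodule.topologicalClosure_minimal _ (Submodule.span_le.2 ?_)
    (Submodule.isClosed_topologicalClosure _)
  rintro _ ⟨x, rfl⟩
  have hx := spectralFun_eq_one_iff.1 (h (-x))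
  rwa [neg_neg] at hx

end SpectralFunction

theorem construction_of_spectrum (N : ℕ) (B L : Finset ℤ)
    (h : IsHadamardTriple N B L) (hB0 : (0 : ℤ) ∈ B) (hL0 : (0 : ℤ) ∈ L)
    (d : ℤ) (hd : d = B.gcd id)
    (μ : Measure ℝ) [IsProbabilityMeasure μ]
    (hμ : μ = (B.card : ℝ≥0∞)⁻¹ •
      ∑ b ∈ B, Measure.map (fun x : ℝ => (x + (b : ℝ)) / (N : ℝ)) μ)
    (Λ : ℕ → Set ℝ)
    (hΛ0 : Λ 0 = (fun x : ℝ => -x) '' (KsetZ N L ∩ { x : ℝ | ∃ m : ℤ, x = (m : ℝ) / (d : ℝ) }))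
    (hΛ : ∀ n, Λ (n + 1) = { y : ℝ | ∃ x ∈ Λ n, ∃ l ∈ L, y = (N : ℝ) * x + (l : ℝ) }) :
    IsSpectrum μ (⋃ n : ℕ, Λ n) := by
  obtain ⟨b, hb, hb0⟩ := Finset.exists_mem_ne h.2.1 0
  have hd0 : B.gcd id ≠ 0 := fun h0 ↦ hb0 (Finset.gcd_eq_zero_iff.1 h0 b hb)
  have hlattice : {x : ℝ | ∃ m : ℤ, x = (m : ℝ) / (d : ℝ)} = dualGroup B := by
    ext x
    rw [SetLike.mem_coe, mem_dualGroup_iff_exists_eq_div_gcd hd0, hd, Set.mem_ofPred_eq]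
  rw [hlattice, Set.image_neg_eq_neg] at hΛ0
  have hΛ0_lattice : Λ 0 ⊆ dualGroup B := by
    rw [hΛ0, Set.neg_subset, neg_coe_set]
    exact Set.inter_subset_right
  have hΛ_lattice : ⋃ n, Λ n ⊆ dualGroup B := iUnion_subset_dualGroup hΛ0_lattice hΛ
  have hΛ_fixed : digitExpand N L (⋃ n, Λ n) = ⋃ n, Λ n :=
    digitExpand_iUnion_eq_self (hΛ0 ▸ h.neg_inter_subset_digitExpand hb hb0) hΛ
  have hφ : ∀ x, fourierStieltjes μ (N * x) = mask B x * fourierStieltjes μ x :=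
    IsSelfSimilarMeasure.fourierStieltjes_mul hμ h.natCast_ne_zero
  have horth := h.pairwise_sub_eq_zero hφ hΛ_lattice hΛ_fixed hb hb0
  obtain ⟨R, hR⟩ := IsSelfSimilarMeasure.exists_ae_norm_le hμ h.1
  refine isSpectrum_of_spectralFun_eq_one horth fun x ↦ (spectralFun_le_one x).antisymm ?_
  refine h.one_le_of_eq_sum_mask_mul hB0 hL0 (analyticAt_spectralFun hR _) spectralFun_le_one
    (h.eq_sum_mask_mul_of_hasSum hφ hΛ_lattice hΛ_fixed (hasSum_spectralFun horth))
    (fun x hx ↦ (spectralFun_eq_one_of_neg_mem ?_).ge) x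
  exact Set.mem_iUnion_of_mem 0 (hΛ0 ▸ Set.neg_mem_neg.2 hx)
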